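/- Suppose β ∈ (0,1) and for every p ∈ ℝ^m the map q ↦ Q(q,p) is differentiable on ℝ^m with the operator norm of its derivative at most β at every point q. Then for all q₁, q₂ ∈ ℝ^m there exists a coupling γ of μ(q₁) and μ(q₂) satisfying ∫ ‖x − y‖ dγ(x,y) ≤ β·‖q₁ − q₂‖; in particular W₁(μ(q₁), μ(q₂)) ≤ β·‖q₁ − q₂‖, so the coarse Ricci curvature of the HMC Markov chain is bounded below by 1 − β. -/

import Mathlib

open MeasureTheory

/-- The Wasserstein-1 distance: infimum of `∫ ‖x − y‖ dγ` over couplings `γ` of `μ` and `ν`. -/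
noncomputable def wassersteinW1 {E : Type*} [NormedAddCommGroup E] [MeasurableSpace E]
    (μ ν : Measure E) : ℝ :=
  sInf ((fun γ : Measure (E × E) => ∫ z, ‖z.1 - z.2‖ ∂γ) ''
    {γ : Measure (E × E) | γ.map Prod.fst = μ ∧ γ.map Prod.snd = ν})

/-- If `q ↦ Q(q,p)` is differentiable with derivative of operator norm at
most `β < 1` everywhere, then for all `q₁, q₂` there is a coupling `γ` of the one-step HMC
laws `μ(q₁)`, `μ(q₂)` with `∫ ‖x − y‖ dγ ≤ β ‖q₁ − q₂‖`; in particular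
`W₁(μ(q₁), μ(q₂)) ≤ β ‖q₁ − q₂‖` and the coarse Ricci curvature is at least `1 − β`. -/
theorem hmc_one_step_contraction
    (m : ℕ) (hm : 1 ≤ m) (β : ℝ) (hβ0 : 0 < β) (hβ1 : β < 1)
    (Q : EuclideanSpace ℝ (Fin m) × EuclideanSpace ℝ (Fin m) → EuclideanSpace ℝ (Fin m))
    (hQ : Measurable Q)
    (G : Measure (EuclideanSpace ℝ (Fin m))) [IsProbabilityMeasure G]
    (hdiff : ∀ p q : EuclideanSpace ℝ (Fin m),
      DifferentiableAt ℝ (fun q' => Q (q', p)) q)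
    (hder : ∀ p q : EuclideanSpace ℝ (Fin m),
      ‖fderiv ℝ (fun q' => Q (q', p)) q‖ ≤ β)
    (q₁ q₂ : EuclideanSpace ℝ (Fin m)) :
    (∃ γ : Measure (EuclideanSpace ℝ (Fin m) × EuclideanSpace ℝ (Fin m)),
      γ.map Prod.fst = G.map (fun p => Q (q₁, p)) ∧
      γ.map Prod.snd = G.map (fun p => Q (q₂, p)) ∧
      (∫ z, ‖z.1 - z.2‖ ∂γ) ≤ β * ‖q₁ - q₂‖) ∧
    wassersteinW1 (G.map fun p => Q (q₁, p)) (G.map fun p => Q (q₂, p)) ≤ β * ‖q₁ - q₂‖ ∧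
    (q₁ ≠ q₂ →
      1 - β ≤ 1 -
        wassersteinW1 (G.map fun p => Q (q₁, p)) (G.map fun p => Q (q₂, p)) / ‖q₁ - q₂‖) := by
  have hlip : ∀ p, ‖Q (q₁, p) - Q (q₂, p)‖ ≤ β * ‖q₁ - q₂‖ := fun p =>
    Convex.norm_image_sub_le_of_norm_fderiv_le (𝕜 := ℝ) (f := fun q' => Q (q', p))
      (fun q _ => hdiff p q) (fun q _ => hder p q) convex_univ (Set.mem_univ q₂) (Set.mem_univ q₁)
  have h1 : Measurable (fun p => Q (q₁, p)) := hQ.comp measurable_prodMk_left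
  have h2 : Measurable (fun p => Q (q₂, p)) := hQ.comp measurable_prodMk_left
  have hγ : ∃ γ : Measure (EuclideanSpace ℝ (Fin m) × EuclideanSpace ℝ (Fin m)),
      γ.map Prod.fst = G.map (fun p => Q (q₁, p)) ∧
      γ.map Prod.snd = G.map (fun p => Q (q₂, p)) ∧
      (∫ z, ‖z.1 - z.2‖ ∂γ) ≤ β * ‖q₁ - q₂‖ := by
    refine ⟨G.map (fun p => (Q (q₁, p), Q (q₂, p))), ?_, ?_, ?_⟩
    · rw [Measure.map_map measurable_fst (h1.prodMk h2)]; rfl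
    · rw [Measure.map_map measurable_snd (h1.prodMk h2)]; rfl
    · rw [integral_map (h1.prodMk h2).aemeasurable
        (by fun_prop)]
      have hint : Integrable (fun p => ‖Q (q₁, p) - Q (q₂, p)‖) G := by
        refine Integrable.of_bound (h1.sub h2).norm.aestronglyMeasurable (β * ‖q₁ - q₂‖) ?_
        exact Filter.Eventually.of_forall fun p => by simpa using hlip p
      calc ∫ p, ‖Q (q₁, p) - Q (q₂, p)‖ ∂G ≤ ∫ _, β * ‖q₁ - q₂‖ ∂G :=
            integral_mono hint (integrable_const _) hlip
        _ = β * ‖q₁ - q₂‖ := by simp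
  have hW : wassersteinW1 (G.map fun p => Q (q₁, p)) (G.map fun p => Q (q₂, p))
      ≤ β * ‖q₁ - q₂‖ := by
    obtain ⟨γ, ha, hb, hc⟩ := hγ
    refine le_trans (csInf_le ⟨0, ?_⟩ ⟨γ, ⟨ha, hb⟩, rfl⟩) hc
    rintro _ ⟨γ', _, rfl⟩
    exact integral_nonneg fun z => norm_nonneg _
  refine ⟨hγ, hW, fun hne => ?_⟩
  have hpos : 0 < ‖q₁ - q₂‖ := norm_pos_iff.mpr (sub_ne_zero.mpr hne)
  have := (div_le_iff₀ hpos).mpr hW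
  linarith
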